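/- Let p be a positive divisor of r. A pair (P,Q) of same-shape standard Young r-multitableaux of rank n lies in the image of G(r,p,n) under the generalized Robinson–Schensted map RS if and only if 2·spin(P) ≡ 0 (mod p). -/

import Mathlib

/-!
The statistic `2 ⬝ spin` is chosen so that `2 ⬝ spin P(w) = a_1 + ⋯ + a_n`: the component
`P_k(w)` has one box for each position with exponent `k` (`twoSpin_Ptab`).  The equivalence
therefore reduces to the surjectivity of the generalized Robinson–Schensted map onto pairs of
same-shape standard multitableaux (`exists_RS_eq`).

That surjectivity follows from the classical one, `exists_RSword`, applied in each component:
the resulting words have disjoint sets of values and of positions, because the label sets of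
the components of `P` and of `Q` partition `{1, …, n}`, and so they assemble to an element of
`W_n`.  The classical statement is proved by induction on the number of boxes.  The
largest label of `Q` lies in a corner (`exists_corner`); removing that corner from `Q`
(`exists_unPlace`) and undoing a row insertion in `P` from the same corner (`exists_unInsert`)
yields a smaller pair of standard tableaux.
-/

open scoped BigOperators

/-!
Common definitions: the complex reflection group `G(r,1,n)` recorded in one-line
notation, its one-dimensional representations, the generalized Robinson–Schensted
map to pairs of `r`-multitableaux, and the associated tableau statistics.
-/

/-- An element of `W_n = G(r,1,n)` in one-line notation
`w = [ζ^{a 0} σ 0, …, ζ^{a (n-1)} σ (n-1)]`: the nonzero entry of column `i`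
is `ζ ^ (a i)` and lies in row `σ i`. -/
@[ext]
structure GW (r n : ℕ) where
  a : Fin n → ZMod r
  σ : Equiv.Perm (Fin n)

namespace GW

variable {r n : ℕ}

instance : Mul (GW r n) := ⟨fun w v => ⟨fun j => w.a (v.σ j) + v.a j, w.σ * v.σ⟩⟩
instance : One (GW r n) := ⟨⟨fun _ => 0, 1⟩⟩
instance : Inv (GW r n) := ⟨fun w => ⟨fun j => -(w.a (w.σ⁻¹ j)), w.σ⁻¹⟩⟩

@[simp] lemma mul_a (w v : GW r n) (j : Fin n) : (w * v).a j = w.a (v.σ j) + v.a j := rfl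
@[simp] lemma mul_sigma (w v : GW r n) : (w * v).σ = w.σ * v.σ := rfl
@[simp] lemma one_a (j : Fin n) : (1 : GW r n).a j = 0 := rfl
@[simp] lemma one_sigma : (1 : GW r n).σ = 1 := rfl
@[simp] lemma inv_a (w : GW r n) (j : Fin n) : (w⁻¹).a j = -(w.a (w.σ⁻¹ j)) := rfl
@[simp] lemma inv_sigma (w : GW r n) : (w⁻¹).σ = w.σ⁻¹ := rfl

instance : Group (GW r n) where
  mul_assoc w v u := by
    ext j
    · simp [Equiv.Perm.mul_apply, add_assoc]
    · simp [mul_assoc]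
  one_mul w := by ext j <;> simp
  mul_one w := by ext j <;> simp
  inv_mul_cancel w := by
    ext j
    · simp
    · simp

end GW

/-- `ζ = exp(2π√-1 / r)`, a primitive `r`-th root of unity. -/
noncomputable def zeta (r : ℕ) : ℂ := Complex.exp (2 * Real.pi * Complex.I / r)

/-- The one-dimensional representation `sgn_i` of `W_n = G(r,1,n)`:
`sgn_i w = ζ^{i (a_1 + ⋯ + a_n)} ⬝ sgn σ`. -/
noncomputable def sgnRep (r n : ℕ) (i : ℕ) (w : GW r n) : ℂ :=
  zeta r ^ (i * ∑ j, (w.a j).val) * ((Equiv.Perm.sign w.σ : ℤ) : ℂ)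

/-- A tableau, recorded as its list of rows of labels. -/
abbrev Tab := List (List ℕ)

/-- Robinson–Schensted row insertion of the value `x` into a tableau. -/
def rowInsert : ℕ → Tab → Tab
  | x, [] => [[x]]
  | x, row :: rest =>
    if h : row.findIdx (fun y => decide (x < y)) < row.length then
      row.set (row.findIdx (fun y => decide (x < y))) x ::
        rowInsert (row.get ⟨row.findIdx (fun y => decide (x < y)), h⟩) rest
    else (row ++ [x]) :: rest

/-- The shape of a tableau: its list of row lengths. -/
def shape (T : Tab) : List ℕ := T.map List.length

/-- Append the label `lab` at the end of row `i` of the (recording) tableau `Q`. -/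
def place (Q : Tab) (i lab : ℕ) : Tab :=
  if i < Q.length then Q.set i ((Q.getD i []) ++ [lab]) else Q ++ [[lab]]

/-- One step of the Robinson–Schensted algorithm: insert the value `x` into the
insertion tableau and record the label `lab` in the new box of the recording
tableau. -/
def RSstep : Tab × Tab → ℕ × ℕ → Tab × Tab := fun PQ xl =>
  let P' := rowInsert xl.1 PQ.1
  let i := (List.range P'.length).findIdx
    (fun i => decide ((PQ.1.getD i []).length < (P'.getD i []).length))
  (P', place PQ.2 i xl.2)

/-- The classical Robinson–Schensted correspondence applied to a word of
(value, label) pairs, producing the insertion and recording tableaux. -/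
def RSword (word : List (ℕ × ℕ)) : Tab × Tab := word.foldl RSstep ([], [])

/-- The positions `i` (in increasing order) whose attached exponent `a i` equals `k`. -/
def labelIdx {r n : ℕ} (w : GW r n) (k : ℕ) : List (Fin n) :=
  (List.finRange n).filter (fun i => decide ((w.a i).val = k))

/-- The word `w^(k)` together with its recording labels: the values `σ i` (1-based)
attached to the positions `i` (1-based) with `a i = k`, in increasing order of `i`. -/
def wordPairs {r n : ℕ} (w : GW r n) (k : ℕ) : List (ℕ × ℕ) :=
  (labelIdx w k).map (fun i => ((w.σ i : ℕ) + 1, (i : ℕ) + 1))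

/-- The insertion multitableau `P(w)` of the generalized Robinson–Schensted map. -/
def Ptab {r n : ℕ} (w : GW r n) : Fin r → Tab := fun k => (RSword (wordPairs w k)).1

/-- The recording multitableau `Q(w)` of the generalized Robinson–Schensted map. -/
def Qtab {r n : ℕ} (w : GW r n) : Fin r → Tab := fun k => (RSword (wordPairs w k)).2

/-- The set of labels of a tableau. -/
def labels (T : Tab) : Finset ℕ := T.flatten.toFinset

/-- The (0-based) index of the row of `T` containing the label `x`. -/
def rowOf (T : Tab) (x : ℕ) : ℕ := T.findIdx (fun row => decide (x ∈ row))

/-- The number of inversions of a tableau: pairs `(i, j)` with `i < j` and the box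
labeled `i` in a row strictly below the box labeled `j`. -/
def invTab (T : Tab) : ℕ :=
  ((labels T ×ˢ labels T).filter (fun p => p.1 < p.2 ∧ rowOf T p.2 < rowOf T p.1)).card

/-- `crossInv S T` is the number of pairs `(j, i)` with `j > i`, `j` a label of `S`
and `i` a label of `T`, i.e. the cardinality of `Inv(S, T)`. -/
def crossInv (S T : Tab) : ℕ :=
  ((labels S ×ˢ labels T).filter (fun p => p.2 < p.1)).card

/-- The number of inversions of a multitableau. -/
def invMulti {r : ℕ} (T : Fin r → Tab) : ℕ :=
  (∑ k, invTab (T k)) + ∑ k, ∑ l, if k < l then crossInv (T k) (T l) else 0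

/-- The sign `(-1)^{inv T}` of a multitableau. -/
def signMulti {r : ℕ} (T : Fin r → Tab) : ℂ := (-1) ^ invMulti T

/-- The number of boxes in the even-indexed rows (1-based indexing) of a tableau. -/
def eTab (T : Tab) : ℕ :=
  ∑ i ∈ Finset.range T.length, if i % 2 = 1 then (T.getD i []).length else 0

/-- The total number of boxes in the even-indexed rows of a multitableau. -/
def eMulti {r : ℕ} (T : Fin r → Tab) : ℕ := ∑ k, eTab (T k)

/-- The number of boxes of a tableau. -/
def sizeTab (T : Tab) : ℕ := T.flatten.length

/-- `2 ⬝ spin T = Σ_k k ⬝ |sh(T_k)|`. -/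
def twoSpin {r : ℕ} (T : Fin r → Tab) : ℕ := ∑ k : Fin r, (k : ℕ) * sizeTab (T k)

/-- The spin statistic `spin T = (1/2) Σ_k k ⬝ |sh(T_k)|`. -/
def spin {r : ℕ} (T : Fin r → Tab) : ℚ := (twoSpin T : ℚ) / 2

/-- The function `π_i(w) = (-1)^{e(P)} (ζ^i)^{spin P + spin Q} sign(P) sign(Q)`
where `(P, Q) = RS(w)`. -/
noncomputable def piStat (r n : ℕ) (i : ℕ) (w : GW r n) : ℂ :=
  (-1) ^ eMulti (Ptab w) *
    (zeta r ^ i) ^ (((spin (Ptab w) + spin (Qtab w) : ℚ) : ℂ)) *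
    signMulti (Ptab w) * signMulti (Qtab w)

/-- `T` is a standard Young `r`-multitableau of rank `n`: each component consists of
nonempty rows of weakly decreasing lengths, labels strictly increase along rows and
down columns, and the labels used are exactly `1, …, n`, each exactly once. -/
def IsStandardMulti (r n : ℕ) (T : Fin r → Tab) : Prop :=
  (∀ k : Fin r,
      (∀ row ∈ T k, row ≠ [] ∧ List.Chain' (· < ·) row) ∧
      List.Chain' (fun r1 r2 => r2.length ≤ r1.length ∧
        ∀ j < r2.length, r1.getD j 0 < r2.getD j 0) (T k)) ∧
  (∑ k : Fin r, ((T k).flatten : Multiset ℕ)) = (Finset.Icc 1 n).val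

/-- A multitableau is ascending if every label of `T k` is smaller than every label
of `T (k+1)`. -/
def AscendingMulti {r : ℕ} (T : Fin r → Tab) : Prop :=
  ∀ (k : ℕ) (h : k + 1 < r),
    ∀ x ∈ labels (T ⟨k, by omega⟩), ∀ y ∈ labels (T ⟨k + 1, h⟩), x < y

/-- An element `w ∈ W_n` is ascending if its exponents increase weakly and, for each
`k < r - 1`, every element of the word `w^(k)` is smaller than every element of
`w^(k+1)`. -/
def AscendingElem {r n : ℕ} (w : GW r n) : Prop :=
  (∀ i j : Fin n, i ≤ j → (w.a i).val ≤ (w.a j).val) ∧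
  ∀ k : ℕ, k + 1 < r →
    ∀ x ∈ (wordPairs w k).map Prod.fst, ∀ y ∈ (wordPairs w (k + 1)).map Prod.fst, x < y

/-- The generator `s_0 = [ζ·1, 2, …, n]`. -/
def s0El (r n : ℕ) : GW r n := ⟨fun i => if (i : ℕ) = 0 then 1 else 0, 1⟩

/-- The generator `s_j` (for `1 ≤ j ≤ n - 1`): the permutation matrix of the
transposition interchanging `j` and `j + 1` (1-based values). -/
def sEl (r n : ℕ) (j : ℕ) (h1 : 1 ≤ j) (h2 : j + 1 ≤ n) : GW r n :=
  ⟨fun _ => 0, Equiv.swap ⟨j - 1, by omega⟩ ⟨j, by omega⟩⟩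

/-- The left operator `L_j(w) = s_j ⬝ w`. -/
def Lop {r n : ℕ} (w : GW r n) (j : ℕ) (h1 : 1 ≤ j) (h2 : j + 1 ≤ n) : GW r n :=
  sEl r n j h1 h2 * w

/-- The right operator `R_j(w) = w ⬝ s_j`. -/
def Rop {r n : ℕ} (w : GW r n) (j : ℕ) (h1 : 1 ≤ j) (h2 : j + 1 ≤ n) : GW r n :=
  w * sEl r n j h1 h2

/-- `L_j` is left admissible for `w`: the exponents attached to the entries with
values `j` and `j+1` differ. -/
def LeftAdm {r n : ℕ} (w : GW r n) (j : ℕ) (h1 : 1 ≤ j) (h2 : j + 1 ≤ n) : Prop :=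
  w.a (w.σ⁻¹ ⟨j - 1, by omega⟩) ≠ w.a (w.σ⁻¹ ⟨j, by omega⟩)

/-- `R_j` is right admissible for `w`: the exponents in positions `j` and `j+1`
differ, i.e. `a_j ≠ a_{j+1}`. -/
def RightAdm {r n : ℕ} (w : GW r n) (j : ℕ) (h1 : 1 ≤ j) (h2 : j + 1 ≤ n) : Prop :=
  w.a ⟨j - 1, by omega⟩ ≠ w.a ⟨j, by omega⟩

/-- A single admissible transformation: `w ↦ L_j(w)` for a left admissible `L_j`,
or `w ↦ R_j(w)` for a right admissible `R_j`. -/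
inductive AdmStep (r n : ℕ) : GW r n → GW r n → Prop
  | left (w : GW r n) (j : ℕ) (h1 : 1 ≤ j) (h2 : j + 1 ≤ n)
      (ha : LeftAdm w j h1 h2) : AdmStep r n w (Lop w j h1 h2)
  | right (w : GW r n) (j : ℕ) (h1 : 1 ≤ j) (h2 : j + 1 ≤ n)
      (ha : RightAdm w j h1 h2) : AdmStep r n w (Rop w j h1 h2)

/-! ### Standard tableaux, row by row -/

/-- The row `s` may be placed directly below the row `row` in a standard tableau. -/
def Dom (row s : List ℕ) : Prop :=
  s.length ≤ row.length ∧ ∀ j < s.length, row.getD j 0 < s.getD j 0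

/-- A standard tableau on an arbitrary set of labels, described recursively by rows.
The junk value `headD [] = []` makes the condition on the last row vacuous. -/
def StdTab : Tab → Prop
  | [] => True
  | row :: rest => row ≠ [] ∧ row.Pairwise (· < ·) ∧ Dom row (rest.headD []) ∧ StdTab rest

lemma headD_eq_getD (T : Tab) : T.headD [] = T.getD 0 [] := by cases T <;> rfl

lemma std_of_chain : ∀ T : Tab, (∀ row ∈ T, row ≠ [] ∧ List.Chain' (· < ·) row) →
    List.Chain' (fun r1 r2 : List ℕ => r2.length ≤ r1.length ∧
        ∀ j < r2.length, r1.getD j 0 < r2.getD j 0) T → StdTab T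
  | [], _, _ => trivial
  | row :: rest, h, hc => by
    have h1 := h row (by simp)
    refine ⟨h1.1, List.isChain_iff_pairwise.mp h1.2, ?_, ?_⟩
    · cases rest with
      | nil => simp [Dom]
      | cons s t => exact (List.isChain_cons_cons.mp hc).1
    · refine std_of_chain rest (fun r hr => h r (by simp [hr])) ?_
      exact (List.IsChain.tail hc :)

/-! ### Reverse row insertion -/

/-- When `x` is expelled upwards into the sorted row `row`, it replaces `y`, the largest
entry below `x`.  The position `A.length` of `y` is weakly to the right of any position `j`
whose entry is below `x`. -/
lemma bump_row : ∀ (row : List ℕ) (x j : ℕ), row.Pairwise (· < ·) → x ∉ row →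
    j < row.length → row.getD j 0 < x →
    ∃ A y B, row = A ++ y :: B ∧ y < x ∧ j ≤ A.length ∧ ∀ b ∈ B, x < b
  | [], x, j, _, _, hj, _ => by simp at hj
  | a :: t, x, j, hs, hx, hj, hlt => by
    rw [List.pairwise_cons] at hs
    by_cases hall : ∀ b ∈ t, x < b
    · refine ⟨[], a, t, rfl, ?_, ?_, hall⟩
      all_goals
        cases j with
        | zero => simp_all
        | succ j =>
          have : j < t.length := by simpa using hj
          have h2 := hall t[j] (by simp)
          simp [this] at hlt
          omega
    · push Not at hall
      obtain ⟨b, hb, hbx⟩ := hall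
      obtain ⟨j', hj', hjj⟩ : ∃ j', j ≤ j' + 1 ∧ ∃ h : j' < t.length, t[j'] < x := by
        cases j with
        | zero =>
          obtain ⟨i, hi, rfl⟩ := List.mem_iff_getElem.mp hb
          exact ⟨i, by omega, hi, lt_of_le_of_ne hbx (by rintro h; simp [← h] at hx)⟩
        | succ j =>
          have : j < t.length := by simpa using hj
          exact ⟨j, le_rfl, this, by simpa [this] using hlt⟩
      obtain ⟨h1, h2⟩ := hjj
      obtain ⟨A, y, B, rfl, h3, h4, h5⟩ := bump_row t x j' hs.2 (by simp_all) h1 (by simpa [h1] using h2)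
      exact ⟨a :: A, y, B, rfl, h3, by simp; omega, h5⟩

/-- Insertion of an `x` larger than the whole first row ends there. -/
lemma rowInsert_append (x : ℕ) (row : List ℕ) (rest : Tab) (h : ∀ a ∈ row, a < x) :
    rowInsert x (row :: rest) = (row ++ [x]) :: rest := by
  have : row.findIdx (fun y => decide (x < y)) = row.length :=
    List.findIdx_eq_length_of_false (fun a ha => by simpa using (h a ha).le)
  rw [rowInsert, dif_neg (by omega)]

/-- Inserting `y` into a row whose first entry above `y` is `x` bumps `x`. -/
lemma rowInsert_bump (x y : ℕ) (A B : List ℕ) (rest : Tab) (h : ∀ a ∈ A, a < y) (hxy : y < x) :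
    rowInsert y ((A ++ x :: B) :: rest) = (A ++ y :: B) :: rowInsert x rest := by
  have : (A ++ x :: B).findIdx (fun z => decide (y < z)) = A.length := by
    have : A.findIdx (fun z => decide (y < z)) = A.length :=
      List.findIdx_eq_length_of_false (fun a ha => by simpa using (h a ha).le)
    rw [List.findIdx_append, this]
    simp [List.findIdx_cons, hxy]
  rw [rowInsert, dif_pos (by simp [this])]
  simp [this]

/-- Reverse row insertion starting from the corner in row `i`.  The final clause is what the
induction over the rows needs: the expelled entry `x` comes from some column `j` of the first
row of `T`, passing to `T'` only increases the surviving entries of that row, and the entries of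
`T'` from column `j` on exceed `x`.  Hence `x` fits into the row above without violating
the column condition. -/
lemma exists_unInsert : ∀ (T : Tab) (i : ℕ), StdTab T → T.flatten.Nodup →
    (T.getD (i + 1) []).length < (T.getD i []).length →
    ∃ (x : ℕ) (T' : Tab), rowInsert x T' = T ∧ StdTab T' ∧ T.flatten.Perm (x :: T'.flatten) ∧
      (∀ k, (T.getD k []).length = (T'.getD k []).length + if k = i then 1 else 0) ∧
      ∃ j < (T.headD []).length, (T.headD []).getD j 0 = x ∧
        ∀ q < (T'.headD []).length, (T.headD []).getD q 0 ≤ (T'.headD []).getD q 0 ∧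
          (j ≤ q → x < (T'.headD []).getD q 0)
  | [], i, _, _, hc => by simp at hc
  | row :: rest, 0, hT, hnd, hc => by
    obtain ⟨hne, hs, hd, hr⟩ := hT
    obtain ⟨row', x, rfl⟩ : ∃ row' x, row = row' ++ [x] :=
      ⟨_, _, (List.dropLast_append_getLast hne).symm⟩
    have hlt : ∀ a ∈ row', a < x := by
      intro a ha; rw [List.pairwise_append] at hs; simp_all
    rcases eq_or_ne row' [] with rfl | hne'
    · have : rest = [] := by
        cases rest with
        | nil => rfl
        | cons s t => obtain ⟨h, -⟩ := hr; simp at hc; exact absurd hc h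
      subst this
      refine ⟨x, [], by simp [rowInsert], trivial, by simp, ?_, 0, by simp, by simp, by simp⟩
      intro k; cases k <;> simp
    · have hc' : (rest.headD []).length ≤ row'.length := by
        cases rest <;> simp at hc ⊢; omega
      refine ⟨x, row' :: rest, rowInsert_append _ _ _ hlt,
        ⟨hne', (List.pairwise_append.mp hs).1, ⟨hc', ?_⟩, hr⟩, ?_, ?_, row'.length, by simp,
        by simp, ?_⟩
      · intro j hj
        have := hd.2 j hj
        rwa [List.getD_append _ _ _ _ (by omega)] at this
      · simp
      · intro k; cases k <;> simp
      · intro q hq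
        simp only [List.headD_cons] at hq ⊢
        rw [List.getD_append _ _ _ _ hq]
        exact ⟨le_rfl, fun h => by omega⟩
  | row :: rest, i + 1, hT, hnd, hc => by
    obtain ⟨hne, hs, hd, hr⟩ := hT
    simp only [List.flatten_cons, List.nodup_append] at hnd
    obtain ⟨x, T', h1, h2, h3, h4, j, h5, h6, h7⟩ :=
      exists_unInsert rest i hr hnd.2.1 (by simpa using hc)
    have hx : x ∈ rest.flatten := h3.mem_iff.mpr (by simp)
    have hxrow : x ∉ row := fun h => (hnd.2.2 x h x hx) rfl
    -- The entry above `x` in column `j` is smaller than `x`, so something can be bumped.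
    obtain ⟨A, y, B, rfl, hy, hj, hB⟩ := bump_row row x j hs hxrow (by have := hd.1; omega)
      (by rw [← h6]; exact hd.2 j h5)
    have hsA := hs
    simp only [List.pairwise_append, List.pairwise_cons] at hsA
    obtain ⟨hA1, ⟨hB1, hB2⟩, hA2⟩ := hsA
    have hlen : (T'.headD []).length ≤ (rest.headD []).length := by
      have := h4 0
      rw [headD_eq_getD, headD_eq_getD]; omega
    refine ⟨y, (A ++ x :: B) :: T', ?_, ⟨by simp, ?_, ?_, h2⟩, ?_, ?_, A.length, by simp, by simp, ?_⟩
    · rw [rowInsert_bump _ _ _ _ _ (fun a ha => hA2 a ha y (by simp)) hy, h1]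
    · simp only [List.pairwise_append, List.pairwise_cons]
      refine ⟨hA1, ⟨hB, hB2⟩, fun a ha b hb => ?_⟩
      have := hA2 a ha y (by simp)
      rcases List.mem_cons.mp hb with rfl | hb
      · omega
      · exact hA2 a ha b (by simp [hb])
    · refine ⟨by
        have := hd.1
        simp only [List.length_append, List.length_cons] at this ⊢
        omega, fun q hq => ?_⟩
      obtain ⟨h8, h9⟩ := h7 q hq
      have h10 := hd.2 q (by omega)
      rcases lt_trichotomy q A.length with h | rfl | h
      · rw [List.getD_append _ _ _ _ h] at h10 ⊢; omega
      · simpa using h9 hj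
      · rw [List.getD_append_right _ _ _ _ h.le] at h10 ⊢
        obtain ⟨m, hm⟩ : ∃ m, q - A.length = m + 1 := ⟨q - A.length - 1, by omega⟩
        rw [hm] at h10 ⊢
        simp only [List.getD_cons_succ] at h10 ⊢
        omega
    · simp only [List.flatten_cons, List.append_assoc, List.cons_append]
      refine List.perm_middle.trans (List.Perm.cons _ (List.Perm.append_left _ ?_))
      exact (List.Perm.append_left B h3).trans List.perm_middle
    · intro k
      cases k with
      | zero => simp
      | succ k => simpa using h4 k
    · intro q hq
      simp only [List.headD_cons] at hq ⊢
      rcases lt_trichotomy q A.length with h | rfl | h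
      · rw [List.getD_append _ _ _ _ h, List.getD_append _ _ _ _ h]
        exact ⟨le_rfl, fun h' => by omega⟩
      · simp [hy, hy.le]
      · rw [List.getD_append_right _ _ _ _ h.le, List.getD_append_right _ _ _ _ h.le]
        obtain ⟨m, hm⟩ : ∃ m, q - A.length = m + 1 := ⟨q - A.length - 1, by omega⟩
        have hmB : m < B.length := by simp at hq; omega
        rw [hm]
        simp only [List.getD_cons_succ, List.getD_eq_getElem _ _ hmB]
        exact ⟨le_rfl, fun _ => hB1 _ (by simp)⟩

/-! ### Corners of the recording tableau -/

/-- Removing the last entry of row `i` of a standard tableau, when that entry is a corner.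
The final clause, that the first row keeps its remaining entries, serves the induction over
the rows. -/
lemma exists_unPlace : ∀ (T : Tab) (i : ℕ), StdTab T →
    (T.getD (i + 1) []).length < (T.getD i []).length →
    ∃ T', place T' i ((T.getD i []).getLastD 0) = T ∧ StdTab T' ∧
      T.flatten.Perm ((T.getD i []).getLastD 0 :: T'.flatten) ∧
      (∀ k, (T.getD k []).length = (T'.getD k []).length + if k = i then 1 else 0) ∧
      ∀ q < (T'.headD []).length, (T.headD []).getD q 0 = (T'.headD []).getD q 0
  | [], i, _, hc => by simp at hc
  | row :: rest, 0, hT, hc => by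
    obtain ⟨hne, hs, hd, hr⟩ := hT
    obtain ⟨row', x, rfl⟩ : ∃ row' x, row = row' ++ [x] :=
      ⟨_, _, (List.dropLast_append_getLast hne).symm⟩
    rcases eq_or_ne row' [] with rfl | hne'
    · have : rest = [] := by
        cases rest with
        | nil => rfl
        | cons s t => obtain ⟨h, -⟩ := hr; simp at hc; exact absurd hc h
      subst this
      refine ⟨[], by simp [place], trivial, by simp, ?_, by simp⟩
      intro k; cases k <;> simp
    · have hc' : (rest.headD []).length ≤ row'.length := by
        cases rest <;> simp at hc ⊢; omega
      refine ⟨row' :: rest, by simp [place],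
        ⟨hne', (List.pairwise_append.mp hs).1, ⟨hc', ?_⟩, hr⟩, ?_, ?_, ?_⟩
      · intro j hj
        have := hd.2 j hj
        rwa [List.getD_append _ _ _ _ (by omega)] at this
      · simp
      · intro k; cases k <;> simp
      · intro q hq
        simp only [List.headD_cons] at hq ⊢
        rw [List.getD_append _ _ _ _ hq]
  | row :: rest, i + 1, hT, hc => by
    obtain ⟨hne, hs, hd, hr⟩ := hT
    obtain ⟨T', h1, h2, h3, h4, h5⟩ := exists_unPlace rest i hr (by simpa using hc)
    have hlen : (T'.headD []).length ≤ (rest.headD []).length := by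
      have := h4 0
      rw [headD_eq_getD, headD_eq_getD]; omega
    refine ⟨row :: T', ?_, ⟨hne, hs, ⟨hlen.trans hd.1, fun q hq => ?_⟩, h2⟩, ?_, ?_, by simp⟩
    · conv_rhs => rw [← h1]
      simp only [place, List.getD_cons_succ, List.length_cons, add_lt_add_iff_right]
      split_ifs <;> simp
    · rw [← h5 q hq]; exact hd.2 q (by omega)
    · simp only [List.flatten_cons, List.getD_cons_succ]
      exact (List.Perm.append_left row h3).trans List.perm_middle
    · intro k
      cases k with
      | zero => simp
      | succ k => simpa using h4 k

/-- The largest label of a nonempty standard tableau sits in a corner. -/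
lemma exists_corner : ∀ (T : Tab) (m : ℕ), StdTab T → m ∈ T.flatten → (∀ l ∈ T.flatten, l ≤ m) →
    ∃ i, (T.getD (i + 1) []).length < (T.getD i []).length ∧ (T.getD i []).getLastD 0 = m
  | [], m, _, h, _ => by simp at h
  | row :: rest, m, hT, hm, hmax => by
    obtain ⟨hne, hs, hd, hr⟩ := hT
    by_cases hrow : m ∈ row
    · refine ⟨0, ?_, ?_⟩
      · have hlen := hd.1
        have : (rest.headD []).length ≠ row.length := by
          intro heq
          obtain ⟨j, hj, rfl⟩ := List.mem_iff_getElem.mp hrow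
          have h1 := hd.2 j (by omega)
          rw [List.getD_eq_getElem _ _ hj, List.getD_eq_getElem _ _ (by omega)] at h1
          have h2 := hmax ((rest.headD [])[j]) (by cases rest <;> simp at heq ⊢; omega)
          omega
        cases rest <;> simp at this hlen ⊢
        · exact List.length_pos_iff.mpr hne
        · omega
      · obtain ⟨row', x, rfl⟩ : ∃ row' x, row = row' ++ [x] :=
          ⟨_, _, (List.dropLast_append_getLast hne).symm⟩
        have h1 := hmax x (by simp)
        simp only [List.pairwise_append] at hs
        have : m ∉ row' := fun h => by have := hs.2.2 m h x (by simp); omega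
        simp_all
    · obtain ⟨i, hi⟩ := exists_corner rest m hr (by simpa [hrow] using hm)
        (fun l hl => hmax l (by simp only [List.flatten_cons, List.mem_append]; exact Or.inr hl))
      exact ⟨i + 1, by simpa using hi⟩

/-! ### Surjectivity of the classical correspondence -/

lemma StdTab.eq_nil : ∀ {T : Tab}, StdTab T → T.flatten = [] → T = []
  | [], _, _ => rfl
  | row :: rest, hT, h => by simp [hT.1] at h

/-- Surjectivity of the classical Robinson–Schensted correspondence: any two standard tableaux
of the same shape (a condition stated row length by row length) are the tableaux of a word of
(value, label) pairs with increasing labels.  Peel off the largest label of `Q` and undo the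
corresponding insertion in `P`. -/
theorem exists_RSword (N : ℕ) : ∀ P Q : Tab, Q.flatten.length = N → StdTab P → StdTab Q →
    P.flatten.Nodup → Q.flatten.Nodup →
    (∀ k, (P.getD k []).length = (Q.getD k []).length) →
    ∃ W : List (ℕ × ℕ), RSword W = (P, Q) ∧ (W.map Prod.fst).Perm P.flatten ∧
      (W.map Prod.snd).Perm Q.flatten ∧ W.Pairwise (fun a b => a.2 < b.2) := by
  induction N with
  | zero =>
    intro P Q hN hP hQ _ _ hsh
    obtain rfl := hQ.eq_nil (List.length_eq_zero_iff.mp hN)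
    obtain rfl : P = [] := by
      cases P with
      | nil => rfl
      | cons row rest => exact absurd (hsh 0) (by simpa using hP.1)
    exact ⟨[], by simp [RSword]⟩
  | succ N ih =>
    intro P Q hN hP hQ hPn hQn hsh
    obtain ⟨m, hm, hmax⟩ : ∃ m ∈ Q.flatten, ∀ l ∈ Q.flatten, l ≤ m := by
      have hne : Q.flatten.toFinset.Nonempty := by
        rw [List.toFinset_nonempty_iff]; intro h; simp [h] at hN
      obtain ⟨m, hm, h⟩ := Finset.exists_max_image _ id hne
      exact ⟨m, by simpa using hm, fun l hl => h l (by simpa using hl)⟩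
    obtain ⟨i, hi, hlast⟩ := exists_corner Q m hQ hm hmax
    obtain ⟨Q', q1, q2, q3, q4, -⟩ := exists_unPlace Q i hQ hi
    obtain ⟨x, P', p1, p2, p3, p4, -⟩ :=
      exists_unInsert P i hP hPn (by rw [hsh, hsh]; exact hi)
    rw [hlast] at q1 q3
    have hPn' := List.nodup_cons.mp (p3.nodup_iff.mp hPn)
    have hQn' := List.nodup_cons.mp (q3.nodup_iff.mp hQn)
    obtain ⟨W, w1, w2, w3, w4⟩ := ih P' Q' (by have := q3.length_eq; simp at this hN; simp; omega)
      p2 q2 hPn'.2 hQn'.2 (fun k => by have := hsh k; rw [p4, q4] at this; omega)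
    -- `RSstep` detects the new box in the row `i` from which it was removed.
    have hrow : (List.range P.length).findIdx
        (fun k => decide ((P'.getD k []).length < (P.getD k []).length)) = i := by
      have hiP : i < P.length := by
        by_contra h
        have := p4 i
        rw [List.getD_eq_default _ _ (not_lt.mp h)] at this
        simp at this
      rw [List.findIdx_eq (by simpa using hiP)]
      refine ⟨?_, fun j hj => ?_⟩
      · have := p4 i; simp only [if_true] at this
        simp only [List.getElem_range, decide_eq_true_eq]; omega
      · have := p4 j; rw [if_neg (by omega)] at this
        simp only [List.getElem_range, decide_eq_false_iff_not]; omega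
    refine ⟨W ++ [(x, m)], ?_, ?_, ?_, ?_⟩
    · have : RSword (W ++ [(x, m)]) = RSstep (RSword W) (x, m) := by simp [RSword]
      rw [this, w1]
      simp only [RSstep, p1, hrow, q1]
    · rw [List.map_append]
      exact (List.Perm.append_right _ w2).trans (List.perm_append_comm.trans p3.symm)
    · rw [List.map_append]
      exact (List.Perm.append_right _ w3).trans (List.perm_append_comm.trans q3.symm)
    · rw [List.pairwise_append]
      refine ⟨w4, by simp, fun a ha b hb => ?_⟩
      obtain rfl := List.mem_singleton.mp hb
      have h1 : a.2 ∈ Q'.flatten := w3.mem_iff.mp (List.mem_map_of_mem ha)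
      exact lt_of_le_of_ne (hmax _ (q3.mem_iff.mpr (by simp [h1])))
        (fun h => hQn'.1 (by rwa [show a.2 = m from h] at h1))

/-! ### Sizes and the spin statistic -/

lemma sizeTab_rowInsert : ∀ (T : Tab) (x : ℕ), sizeTab (rowInsert x T) = sizeTab T + 1
  | [], x => by simp [rowInsert, sizeTab]
  | row :: rest, x => by
    unfold sizeTab at *
    rw [rowInsert]
    split_ifs with h
    · have := sizeTab_rowInsert rest (row.get ⟨row.findIdx (fun y => decide (x < y)), h⟩)
      unfold sizeTab at this
      simp only [List.flatten_cons, List.length_append, List.length_set, this]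
      omega
    · simp only [List.flatten_cons, List.length_append, List.length_singleton]
      omega

lemma sizeTab_RSword (W : List (ℕ × ℕ)) : sizeTab (RSword W).1 = W.length := by
  induction W using List.reverseRecOn with
  | nil => simp [RSword, sizeTab]
  | append_singleton W a ih =>
    have : RSword (W ++ [a]) = RSstep (RSword W) a := by simp [RSword]
    rw [this]
    simp [RSstep, sizeTab_rowInsert, ih]

/-- `P_k(w)` has as many boxes as there are positions with exponent `k`, so `2 ⬝ spin P(w)`
is the sum of the exponents of `w`. -/
lemma twoSpin_Ptab {r n : ℕ} [NeZero r] (w : GW r n) :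
    twoSpin (Ptab w) = ∑ j, (w.a j).val := by
  have hsize (k : Fin r) : sizeTab (Ptab w k) = ∑ j, if (w.a j).val = k then 1 else 0 := by
    rw [Ptab, sizeTab_RSword, wordPairs, List.length_map, labelIdx, Finset.sum_boole,
      ← List.toFinset_card_of_nodup ((List.nodup_finRange n).filter _), Nat.cast_id]
    congr 1
    ext j
    simp
  simp only [twoSpin, hsize, Finset.mul_sum]
  rw [Finset.sum_comm]
  refine Finset.sum_congr rfl fun j _ => ?_
  rw [Finset.sum_eq_single ⟨(w.a j).val, ZMod.val_lt _⟩]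
  · simp
  · intro k _ hk
    rw [if_neg (fun h => hk (Fin.ext h.symm)), mul_zero]
  · simp

/-! ### Labels of a standard multitableau -/

section Labels

variable {r n : ℕ} {T : Fin r → Tab}

lemma IsStandardMulti.std (h : IsStandardMulti r n T) (k : Fin r) : StdTab (T k) :=
  std_of_chain _ (h.1 k).1 (h.1 k).2

lemma IsStandardMulti.sum_count (h : IsStandardMulti r n T) (x : ℕ) :
    ∑ k, (T k).flatten.count x = if x ∈ Finset.Icc 1 n then 1 else 0 := by
  have h1 := congrArg (Multiset.count x) h.2
  rw [Multiset.count_sum', Multiset.count_eq_of_nodup (Finset.Icc 1 n).nodup] at h1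
  simpa only [Multiset.coe_count, Finset.mem_val] using h1

lemma IsStandardMulti.mem_iff (h : IsStandardMulti r n T) (x : ℕ) :
    (∃ k, x ∈ (T k).flatten) ↔ 1 ≤ x ∧ x ≤ n := by
  have h1 := h.sum_count x
  rw [← Finset.mem_Icc]
  constructor
  · rintro ⟨k, hk⟩
    by_contra hx
    rw [if_neg hx, Finset.sum_eq_zero_iff] at h1
    exact List.count_eq_zero.mp (h1 k (Finset.mem_univ k)) hk
  · intro hx
    by_contra! hk
    rw [if_pos hx, Finset.sum_eq_zero fun k _ => List.count_eq_zero.mpr (hk k)] at h1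
    exact zero_ne_one h1

lemma IsStandardMulti.sum_count_le (h : IsStandardMulti r n T) (x : ℕ) :
    ∑ k, (T k).flatten.count x ≤ 1 := by
  rw [h.sum_count]; split_ifs <;> simp

lemma IsStandardMulti.nodup (h : IsStandardMulti r n T) (k : Fin r) : (T k).flatten.Nodup :=
  List.nodup_iff_count_le_one.mpr fun x =>
    (Finset.single_le_sum (f := fun k => (T k).flatten.count x) (fun _ _ => Nat.zero_le _)
      (Finset.mem_univ k)).trans (h.sum_count_le x)

/-- The components of a standard multitableau have disjoint label sets. -/
lemma IsStandardMulti.eq_of_mem (h : IsStandardMulti r n T) {x : ℕ} {k l : Fin r}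
    (hk : x ∈ (T k).flatten) (hl : x ∈ (T l).flatten) : k = l := by
  by_contra hkl
  have h1 := Finset.sum_le_sum_of_subset (f := fun k => (T k).flatten.count x)
    (Finset.subset_univ {k, l})
  rw [Finset.sum_pair hkl] at h1
  have h2 := h.sum_count_le x
  have h3 := List.count_pos_iff.mpr hk
  have h4 := List.count_pos_iff.mpr hl
  omega

end Labels

lemma length_getD_eq_of_shape_eq {P Q : Tab} (h : shape P = shape Q) (k : ℕ) :
    (P.getD k []).length = (Q.getD k []).length := by
  have key (T : Tab) : (T.getD k []).length = (shape T).getD k 0 := by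
    rw [shape, ← List.length_nil (α := ℕ), List.getD_map]
  rw [key, key, h]

/-! ### The generalized correspondence -/

/-- Surjectivity of the generalized Robinson–Schensted map: the words `W k` realizing the
components `(P k, Q k)` together use each position and each value exactly once, so they are
the words `w^(k)` of a unique `w`, with exponent `k` at the positions occurring in `W k`. -/
theorem exists_RS_eq {r n : ℕ} [NeZero r] {P Q : Fin r → Tab}
    (hP : IsStandardMulti r n P) (hQ : IsStandardMulti r n Q)
    (hsh : ∀ k, shape (P k) = shape (Q k)) :
    ∃ w : GW r n, Ptab w = P ∧ Qtab w = Q := by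
  choose W hRS hfst hsnd hsort using fun k => exists_RSword _ (P k) (Q k) rfl (hP.std k) (hQ.std k)
    (hP.nodup k) (hQ.nodup k) (length_getD_eq_of_shape_eq (hsh k))
  have hfst' {k v l} (h : (v, l) ∈ W k) : v ∈ (P k).flatten :=
    (hfst k).mem_iff.mp (List.mem_map_of_mem h)
  have hsnd' {k v l} (h : (v, l) ∈ W k) : l ∈ (Q k).flatten :=
    (hsnd k).mem_iff.mp (List.mem_map_of_mem h)
  have hinj1 {k} := List.inj_on_of_nodup_map ((hfst k).nodup_iff.mpr (hP.nodup k))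
  have hinj2 {k} := List.inj_on_of_nodup_map ((hsnd k).nodup_iff.mpr (hQ.nodup k))
  have hex (i : Fin n) : ∃ (k : Fin r) (v : Fin n), ((v : ℕ) + 1, (i : ℕ) + 1) ∈ W k := by
    obtain ⟨k, hk⟩ := (hQ.mem_iff ((i : ℕ) + 1)).mpr ⟨by omega, by omega⟩
    obtain ⟨⟨v, l⟩, hvl, rfl : l = i + 1⟩ := List.mem_map.mp ((hsnd k).mem_iff.mpr hk)
    obtain ⟨h1, h2⟩ := (hP.mem_iff v).mp ⟨k, hfst' hvl⟩
    exact ⟨k, ⟨v - 1, by omega⟩, by simpa [Nat.sub_add_cancel h1] using hvl⟩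
  choose κ v hκ using hex
  have hv : Function.Injective v := by
    intro i j hij
    have hi := hκ i
    have hj := hκ j
    rw [hij] at hi
    rw [hP.eq_of_mem (hfst' hi) (hfst' hj)] at hi
    have := hinj1 hi hj rfl
    exact Fin.ext (by simpa using this)
  let w : GW r n := ⟨fun i => ((κ i : ℕ) : ZMod r),
    Equiv.ofBijective v (Finite.injective_iff_bijective.mp hv)⟩
  have hval (i : Fin n) : (w.a i).val = κ i := ZMod.val_natCast_of_lt (κ i).isLt
  have hword (k : Fin r) : wordPairs w k = W k := by
    -- Both words are strictly sorted by position, so it suffices to compare their entries.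
    have : Std.Irrefl (fun a b : ℕ × ℕ => a.2 < b.2) := ⟨fun a => lt_irrefl a.2⟩
    have : Std.Antisymm (fun a b : ℕ × ℕ => a.2 < b.2) :=
      ⟨fun a b h1 h2 => absurd h1 (lt_asymm h2)⟩
    refine List.Pairwise.eq_of_mem_iff (r := fun a b : ℕ × ℕ => a.2 < b.2) ?_ (hsort k) ?_
    · rw [wordPairs, List.pairwise_map]
      refine ((List.pairwise_lt_finRange n).filter _).imp ?_
      intro i j hij
      simpa using hij
    · rintro ⟨x, l⟩
      simp only [wordPairs, labelIdx, List.mem_map, List.mem_filter, List.mem_finRange, true_and,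
        decide_eq_true_eq, hval]
      constructor
      · rintro ⟨i, hi, he⟩
        rw [← he, ← Fin.ext hi]
        exact hκ i
      · intro h
        obtain ⟨h1, h2⟩ := (hQ.mem_iff l).mp ⟨k, hsnd' h⟩
        obtain ⟨i, rfl⟩ : ∃ i : Fin n, l = i + 1 := ⟨⟨l - 1, by omega⟩, by simp; omega⟩
        have hk := hQ.eq_of_mem (hsnd' (hκ i)) (hsnd' h)
        exact ⟨i, congrArg Fin.val hk, hinj2 (hk ▸ hκ i) h rfl⟩
  exact ⟨w, funext fun k => by rw [Ptab, hword, hRS], funext fun k => by rw [Qtab, hword, hRS]⟩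

/-- **Proposition.** Let `p` be a positive divisor of `r`.  A pair `(P, Q)` of
same-shape standard Young `r`-multitableaux of rank `n` lies in the image of
`G(r,p,n)` under the generalized Robinson–Schensted map if and only if
`2 ⬝ spin P ≡ 0 (mod p)`. -/
theorem mem_RS_image_iff (r p n : ℕ) (hr : 1 ≤ r) (hn : 1 ≤ n)
    (hp : 0 < p) (hpr : p ∣ r) (P Q : Fin r → Tab)
    (hP : IsStandardMulti r n P) (hQ : IsStandardMulti r n Q)
    (hsh : ∀ k, shape (P k) = shape (Q k)) :
    (∃ w : GW r n, (∑ j, (w.a j).val) % p = 0 ∧ Ptab w = P ∧ Qtab w = Q) ↔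
      twoSpin P % p = 0 := by
  have : NeZero r := ⟨by omega⟩
  constructor
  · rintro ⟨w, hw, rfl, -⟩
    rwa [twoSpin_Ptab]
  · intro h
    obtain ⟨w, rfl, hw⟩ := exists_RS_eq hP hQ hsh
    exact ⟨w, by rwa [← twoSpin_Ptab], rfl, hw⟩
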